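/- Let n ≥ 1, 1 ≤ r ≤ q ≤ ∞, and α, β ≥ 0, and assume α ≤ β if r = q. Then there exists C > 0 such that for every T > 0, every locally integrable φ on ℝ^n with |||φ|||_{r,α;T^{1/2}} < ∞, and every t ∈ (0,T], |||S(t)φ|||_{q,β;T^{1/2}} ≤ C t^{−(n/2)(1/r − 1/q)} [log(e+1/t)]^{−α/r + β/q} |||φ|||_{r,α;T^{1/2}}, where S(t) is convolution with the Gaussian heat kernel (with the convention that for q = ∞ the norm |||·|||_{∞,β;ρ} is the L^∞ norm). -/

import Mathlib

open MeasureTheory Real Set ENNReal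

noncomputable def logFac (s : ℝ) : ℝ := Real.log (Real.exp 1 + 1 / s)

/-- The weak Zygmund type norm `‖f‖_{𝔏^{q,∞}(log 𝔏)^α}` for an exponent
`q ∈ [1,∞]`; for `q = ∞` it is the `L^∞` norm. -/
noncomputable def zygNormE (n : ℕ) (q : ℝ≥0∞) (α : ℝ)
    (f : EuclideanSpace ℝ (Fin n) → ℝ) : ℝ≥0∞ :=
  if q = ⊤ then eLpNorm f ⊤ volume
  else
    ⨆ s : Set.Ioi (0 : ℝ),
      (ENNReal.ofReal (logFac s.1) ^ α *
        ⨆ E : {E : Set (EuclideanSpace ℝ (Fin n)) //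
            MeasurableSet E ∧ volume E = ENNReal.ofReal s.1},
          ∫⁻ x in E.1, ENNReal.ofReal (|f x| ^ q.toReal)) ^ (1 / q.toReal)

/-- The uniformly local weak Zygmund type norm `|||f|||_{q,α;ρ}`. -/
noncomputable def zygNormULE (n : ℕ) (q : ℝ≥0∞) (α ρ : ℝ)
    (f : EuclideanSpace ℝ (Fin n) → ℝ) : ℝ≥0∞ :=
  ⨆ z : EuclideanSpace ℝ (Fin n),
    zygNormE n q α ((Metric.ball z ρ).indicator f)

noncomputable def heatKernel (n : ℕ) (x : EuclideanSpace ℝ (Fin n)) (t : ℝ) : ℝ :=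
  (4 * Real.pi * t) ^ (-(n : ℝ) / 2) * Real.exp (-‖x‖ ^ 2 / (4 * t))

noncomputable def heatSg (n : ℕ) (t : ℝ) (φ : EuclideanSpace ℝ (Fin n) → ℝ)
    (x : EuclideanSpace ℝ (Fin n)) : ℝ :=
  ∫ y, heatKernel n (x - y) t * φ y

/-!
By Jensen's inequality `|S(t)φ| ^ r ≤ u := G(·, t) ∗ |φ| ^ r`, so for `r ≤ q < ∞` everything is
about `∫_E u ^ p` with `p = q / r`. Two properties of `u` suffice. Convolution with a probability
density averages translates, so `u` has the same local bound
`∫_E u ≤ [log(e + 1/|E|)] ^ (-α) ‖φ‖ ^ r` as `|φ| ^ r`. Averaging the Gaussian over balls of radius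
`√t` and applying that bound on each ball gives `u ≤ C t ^ (-n/2) [log(e + 1/t)] ^ (-α) ‖φ‖ ^ r`.

For `|E| ≤ t ^ (n/2)` the sup bound alone controls `∫_E u ^ p`. For larger `E` and `p = 1` the
bound on `∫_E u` is already the claim, as `α ≤ β`. For larger `E` and `p > 1` truncate at a level
`θ`: where `u ≤ θ` use `u ^ p ≤ θ ^ (p - 1) u`, while `{u > θ}` is so small that the bound on its
integral supplies the powers of the logarithm missing from the sup bound.
-/

theorem one_le_logFac {s : ℝ} (hs : 0 < s) : 1 ≤ logFac s := by
  rw [logFac, Real.le_log_iff_exp_le (by positivity)]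
  linarith [one_div_pos.mpr hs]

theorem logFac_pos {s : ℝ} (hs : 0 < s) : 0 < logFac s :=
  one_pos.trans_le (one_le_logFac hs)

theorem logFac_anti {s u : ℝ} (hs : 0 < s) (hsu : s ≤ u) : logFac u ≤ logFac s := by
  have hu : 0 < u := hs.trans_le hsu
  exact Real.log_le_log (by positivity) (by gcongr)

theorem logFac_le_log_add_logFac_mul {s l : ℝ} (hs : 0 < s) (hl : 1 ≤ l) :
    logFac s ≤ Real.log l + logFac (l * s) := by
  rw [logFac, logFac, ← Real.log_mul (by positivity) (by positivity)]
  refine Real.log_le_log (by positivity) ?_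
  calc Real.exp 1 + 1 / s ≤ l * Real.exp 1 + 1 / s := by
        gcongr
        exact le_mul_of_one_le_left (Real.exp_pos 1).le hl
    _ = l * (Real.exp 1 + 1 / (l * s)) := by field_simp

theorem logFac_le_one_add_log_mul_logFac_mul {s l : ℝ} (hs : 0 < s) (hl : 1 ≤ l) :
    logFac s ≤ (1 + Real.log l) * logFac (l * s) := by
  have hls : 1 ≤ logFac (l * s) := one_le_logFac (by positivity)
  nlinarith [logFac_le_log_add_logFac_mul hs hl, Real.log_nonneg hl]

theorem logFac_rpow_le {p t : ℝ} (hp : 0 ≤ p) (ht : 0 < t) :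
    logFac (t ^ p) ≤ (2 + p) * logFac t := by
  set u := Real.exp 1 + 1 / t
  have htu : 1 / t ≤ u := by linarith [Real.exp_pos 1]
  have heu : Real.exp 1 ≤ u := by linarith [one_div_pos.mpr ht]
  have hu1 : 1 ≤ u := (Real.one_le_exp zero_le_one).trans heu
  have hexp : Real.exp 1 ≤ u ^ (1 + p) :=
    heu.trans (Real.self_le_rpow_of_one_le hu1 (by linarith))
  have hpow : 1 / t ^ p ≤ u ^ (1 + p) := by
    calc 1 / t ^ p = (1 / t) ^ p := by rw [Real.div_rpow zero_le_one ht.le, Real.one_rpow]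
      _ ≤ u ^ p := by gcongr
      _ ≤ u ^ (1 + p) := Real.rpow_le_rpow_of_exponent_le hu1 (by linarith)
  calc logFac (t ^ p) ≤ Real.log (2 * u ^ (1 + p)) :=
        Real.log_le_log (by positivity) (by linarith)
    _ = Real.log 2 + (1 + p) * logFac t := by
        rw [Real.log_mul two_ne_zero (by positivity), Real.log_rpow (by positivity), logFac]
    _ ≤ (2 + p) * logFac t := by linarith [Real.log_two_lt_d9, one_le_logFac ht]

theorem logFac_le_of_rpow_le {a s t : ℝ} (ha : 0 ≤ a) (ht : 0 < t) (hts : t ^ a ≤ s) :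
    logFac s ≤ (2 + a) * logFac t :=
  (logFac_anti (by positivity) hts).trans (logFac_rpow_le ha ht)

theorem exists_logFac_le_mul_logFac_mul_rpow {p c : ℝ} (hp : 0 < p) (hc : 0 < c) :
    ∃ K > 0, ∀ t : ℝ, 0 < t → logFac t ≤ K * logFac (c * t ^ p) := by
  have hlog := Real.log_nonneg (le_max_left 1 c)
  refine ⟨(2 + 1 / p) * (1 + Real.log (max 1 c)), by positivity, fun t ht => ?_⟩
  calc logFac t = logFac ((t ^ p) ^ (1 / p)) := by
        rw [← Real.rpow_mul ht.le, mul_one_div_cancel hp.ne', Real.rpow_one]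
    _ ≤ (2 + 1 / p) * logFac (t ^ p) := logFac_rpow_le (by positivity) (by positivity)
    _ ≤ (2 + 1 / p) * ((1 + Real.log (max 1 c)) * logFac (max 1 c * t ^ p)) := by
        gcongr
        exact logFac_le_one_add_log_mul_logFac_mul (by positivity) (le_max_left 1 c)
    _ ≤ (2 + 1 / p) * ((1 + Real.log (max 1 c)) * logFac (c * t ^ p)) := by
        gcongr
        exact logFac_anti (by positivity) (by gcongr; exact le_max_right 1 c)
    _ = (2 + 1 / p) * (1 + Real.log (max 1 c)) * logFac (c * t ^ p) := by ring

-- The factor `logFac t ^ κ` costs only `κ * log (logFac t)`, half of which is absorbed on the left.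
theorem exists_logFac_le_mul_logFac_mul_rpow_mul_rpow {p c κ : ℝ} (hp : 0 < p) (hc : 0 < c)
    (hκ : 0 ≤ κ) :
    ∃ K > 0, ∀ t : ℝ, 0 < t → logFac t ≤ K * logFac (c * t ^ p * logFac t ^ κ) := by
  obtain ⟨K, hK, hle⟩ := exists_logFac_le_mul_logFac_mul_rpow hp hc
  set M := 2 * (K * κ) + 1 with hM
  have hM1 : 1 ≤ M := by rw [hM]; linarith [mul_nonneg hK.le hκ]
  have hlogM := Real.log_nonneg hM1
  refine ⟨2 * (K * κ * Real.log M + K), by positivity, fun t ht => ?_⟩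
  have hL1 := one_le_logFac ht
  have hL := logFac_pos ht
  set w := c * t ^ p * logFac t ^ κ
  have hw : 1 ≤ logFac w := one_le_logFac (by positivity)
  have hcost : logFac (c * t ^ p) ≤ κ * Real.log (logFac t) + logFac w := by
    rw [← Real.log_rpow hL, show w = logFac t ^ κ * (c * t ^ p) from mul_comm _ _]
    exact logFac_le_log_add_logFac_mul (by positivity) (Real.one_le_rpow hL1 hκ)
  have habsorb : K * κ * Real.log (logFac t) ≤ logFac t / 2 + K * κ * Real.log M := by
    have hlog : Real.log (logFac t) ≤ logFac t / M + Real.log M := by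
      have := Real.log_le_sub_one_of_pos (show 0 < logFac t / M by positivity)
      rw [Real.log_div hL.ne' (by positivity)] at this
      linarith
    calc K * κ * Real.log (logFac t) ≤ K * κ * (logFac t / M + Real.log M) := by gcongr
      _ = K * κ / M * logFac t + K * κ * Real.log M := by ring
      _ ≤ 1 / 2 * logFac t + K * κ * Real.log M := by
          have hM2 : K * κ / M ≤ 1 / 2 := by
            rw [div_le_div_iff₀ (by positivity) two_pos]
            linarith
          exact add_le_add_left (mul_le_mul_of_nonneg_right hM2 hL.le) _
      _ = logFac t / 2 + K * κ * Real.log M := by ring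
  have hhalf : logFac t ≤ 2 * (K * κ * Real.log M) + 2 * K * logFac w := by
    nlinarith [hle t ht]
  nlinarith [mul_nonneg (mul_nonneg hK.le hκ) hlogM]

theorem one_add_log_rpow_le {β l : ℝ} (hβ : 0 ≤ β) (hl : 1 ≤ l) :
    (1 + Real.log l) ^ β ≤ (1 + β) ^ β * l := by
  have hl0 : 0 < l := by positivity
  have hlog := Real.log_nonneg hl
  have hε : 1 + Real.log l ≤ (1 + β) * l ^ (1 + β)⁻¹ := by
    have := Real.log_le_sub_one_of_pos (show 0 < l ^ (1 + β)⁻¹ by positivity)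
    rw [Real.log_rpow hl0, inv_mul_le_iff₀ (by positivity)] at this
    linarith
  calc (1 + Real.log l) ^ β ≤ ((1 + β) * l ^ (1 + β)⁻¹) ^ β := by gcongr
    _ = (1 + β) ^ β * l ^ ((1 + β)⁻¹ * β) := by
        rw [Real.mul_rpow (by positivity) (by positivity), ← Real.rpow_mul hl0.le]
    _ ≤ (1 + β) ^ β * l ^ (1 : ℝ) := by
        gcongr
        rw [inv_mul_le_iff₀ (by positivity)]
        linarith
    _ = (1 + β) ^ β * l := by rw [Real.rpow_one]

theorem mul_logFac_rpow_le {β s u : ℝ} (hβ : 0 ≤ β) (hs : 0 < s) (hsu : s ≤ u) :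
    s * logFac s ^ β ≤ (1 + β) ^ β * (u * logFac u ^ β) := by
  have hl : 1 ≤ u / s := by rwa [one_le_div hs]
  have hlog := Real.log_nonneg hl
  have hLs := logFac_pos hs
  have hLu := logFac_pos (hs.trans_le hsu)
  have hscale : logFac s ≤ (1 + Real.log (u / s)) * logFac u := by
    simpa [div_mul_cancel₀ u hs.ne'] using logFac_le_one_add_log_mul_logFac_mul hs hl
  calc s * logFac s ^ β ≤ s * ((1 + Real.log (u / s)) ^ β * logFac u ^ β) := by
        rw [← Real.mul_rpow (by positivity) hLu.le]
        gcongr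
    _ ≤ s * ((1 + β) ^ β * (u / s) * logFac u ^ β) := by
        gcongr
        exact one_add_log_rpow_le hβ hl
    _ = (1 + β) ^ β * (u * logFac u ^ β) := by field_simp

theorem rpow_neg_le_mul_rpow_neg {α K x y : ℝ} (hα : 0 ≤ α) (hK : 0 < K) (hx : 0 < x)
    (hxy : x ≤ K * y) : y ^ (-α) ≤ K ^ α * x ^ (-α) := by
  calc y ^ (-α) ≤ (x / K) ^ (-α) :=
        Real.rpow_le_rpow_of_nonpos (by positivity) (by rwa [div_le_iff₀' hK]) (by linarith)
    _ = K ^ α * x ^ (-α) := by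
        rw [Real.div_rpow hx.le hK.le, Real.rpow_neg hK.le, div_inv_eq_mul, mul_comm]

theorem mul_rpow_mul_rpow_rpow {c x y : ℝ} (hc : 0 ≤ c) (hx : 0 ≤ x) (hy : 0 ≤ y) (a b p : ℝ) :
    (c * x ^ a * y ^ b) ^ p = c ^ p * x ^ (a * p) * y ^ (b * p) := by
  rw [Real.mul_rpow (by positivity) (by positivity), Real.mul_rpow hc (by positivity),
    ← Real.rpow_mul hx, ← Real.rpow_mul hy]

theorem rpow_mul_le_of_le_rpow {a α β p c s t : ℝ} (ha : 0 ≤ a) (hβ : 0 ≤ β) (hc : 0 ≤ c)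
    (hs : 0 < s) (ht : 0 < t) (hst : s ≤ t ^ a) :
    (c * t ^ (-a) * logFac t ^ (-α)) ^ p * s ≤
      c ^ p * ((1 + β) * (2 + a)) ^ β *
        (t ^ (-a * (p - 1)) * logFac t ^ (-α * p + β) * logFac s ^ (-β)) := by
  have hLs := logFac_pos hs
  have hLt := logFac_pos ht
  have hsβ : s * logFac s ^ β ≤ ((1 + β) * (2 + a)) ^ β * (t ^ a * logFac t ^ β) := by
    have := logFac_pos (show 0 < t ^ a by positivity)
    calc s * logFac s ^ β ≤ (1 + β) ^ β * (t ^ a * logFac (t ^ a) ^ β) :=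
          mul_logFac_rpow_le hβ hs hst
      _ ≤ (1 + β) ^ β * (t ^ a * ((2 + a) * logFac t) ^ β) := by
          gcongr
          exact logFac_rpow_le ha ht
      _ = ((1 + β) * (2 + a)) ^ β * (t ^ a * logFac t ^ β) := by
          rw [Real.mul_rpow (by positivity) hLt.le, Real.mul_rpow (by positivity) (by positivity)]
          ring
  calc (c * t ^ (-a) * logFac t ^ (-α)) ^ p * s
      = c ^ p * t ^ (-a * p) * logFac t ^ (-α * p) * (s * logFac s ^ β) * logFac s ^ (-β) := by
        rw [mul_rpow_mul_rpow_rpow hc ht.le hLt.le, Real.rpow_neg hLs.le]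
        field_simp
    _ ≤ c ^ p * t ^ (-a * p) * logFac t ^ (-α * p) *
          (((1 + β) * (2 + a)) ^ β * (t ^ a * logFac t ^ β)) * logFac s ^ (-β) := by gcongr
    _ = c ^ p * ((1 + β) * (2 + a)) ^ β *
          (t ^ (-a * (p - 1)) * logFac t ^ (-α * p + β) * logFac s ^ (-β)) := by
        rw [Real.rpow_add hLt, show -a * (p - 1) = -a * p + a by ring, Real.rpow_add ht]
        ring

theorem one_le_mul_logFac_rpow_mul_rpow_neg {a γ s t : ℝ} (ha : 0 ≤ a) (hγ : 0 ≤ γ) (hs : 0 < s)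
    (ht : 0 < t) (hts : t ^ a ≤ s) :
    1 ≤ (2 + a) ^ γ * logFac t ^ γ * logFac s ^ (-γ) := by
  have hLs := logFac_pos hs
  rw [Real.rpow_neg hLs.le, ← div_eq_mul_inv, one_le_div (by positivity),
    ← Real.mul_rpow (by positivity) (logFac_pos ht).le]
  exact Real.rpow_le_rpow hLs.le (logFac_le_of_rpow_le ha ht hts) hγ

theorem logFac_rpow_neg_le_of_rpow_le {a α β s t : ℝ} (ha : 0 ≤ a) (hαβ : α ≤ β) (hs : 0 < s)
    (ht : 0 < t) (hts : t ^ a ≤ s) :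
    logFac s ^ (-α) ≤ (2 + a) ^ (β - α) * (logFac t ^ (-α + β) * logFac s ^ (-β)) := by
  have hLs := logFac_pos hs
  calc logFac s ^ (-α) ≤
        logFac s ^ (-α) * ((2 + a) ^ (β - α) * logFac t ^ (β - α) * logFac s ^ (-(β - α))) :=
        le_mul_of_one_le_right (by positivity)
          (one_le_mul_logFac_rpow_mul_rpow_neg ha (sub_nonneg.mpr hαβ) hs ht hts)
    _ = (2 + a) ^ (β - α) * logFac t ^ (β - α) * (logFac s ^ (-α) * logFac s ^ (-(β - α))) := by
        ring
    _ = (2 + a) ^ (β - α) * (logFac t ^ (-α + β) * logFac s ^ (-β)) := by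
        rw [← Real.rpow_add hLs, mul_assoc, show β - α = -α + β by ring,
          show -α + -(-α + β) = -β by ring]

-- With `A` the base of the second power, `θ = A * logFac t ^ (-α / (p - 1))` balances both terms.
theorem exists_threshold_rpow_le {a α p c : ℝ} (ha : 0 < a) (hα : 0 ≤ α) (hp : 1 < p)
    (hc : 0 < c) :
    ∃ C > 0, ∀ t : ℝ, 0 < t → ∃ θ > 0,
      θ ^ (p - 1) + (c * t ^ (-a) * logFac t ^ (-α)) ^ (p - 1) * logFac (1 / θ) ^ (-α) ≤
        C * (t ^ (-a * (p - 1)) * logFac t ^ (-α * p)) := by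
  have hp1 : 0 < p - 1 := sub_pos.mpr hp
  set κ := α + α / (p - 1) with hκ
  obtain ⟨K, hK, hlog⟩ :=
    exists_logFac_le_mul_logFac_mul_rpow_mul_rpow ha (inv_pos.mpr hc) (show 0 ≤ κ by positivity)
  refine ⟨c ^ (p - 1) * (1 + K ^ α), by positivity, fun t ht => ?_⟩
  have hL := logFac_pos ht
  refine ⟨c * t ^ (-a) * logFac t ^ (-κ), by positivity, ?_⟩
  have hθ : 1 / (c * t ^ (-a) * logFac t ^ (-κ)) = c⁻¹ * t ^ a * logFac t ^ κ := by
    rw [Real.rpow_neg ht.le, Real.rpow_neg hL.le]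
    field_simp
  have hmod : logFac (c⁻¹ * t ^ a * logFac t ^ κ) ^ (-α) ≤ K ^ α * logFac t ^ (-α) :=
    rpow_neg_le_mul_rpow_neg hα hK hL (hlog t ht)
  have hκp : -κ * (p - 1) = -α * p := by
    rw [hκ]
    field_simp
    ring
  have hαp : logFac t ^ (-α * p) = logFac t ^ (-α * (p - 1)) * logFac t ^ (-α) := by
    rw [← Real.rpow_add hL]
    ring_nf
  rw [hθ, mul_rpow_mul_rpow_rpow hc.le ht.le hL.le, mul_rpow_mul_rpow_rpow hc.le ht.le hL.le, hκp]
  calc c ^ (p - 1) * t ^ (-a * (p - 1)) * logFac t ^ (-α * p) +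
        c ^ (p - 1) * t ^ (-a * (p - 1)) * logFac t ^ (-α * (p - 1)) *
          logFac (c⁻¹ * t ^ a * logFac t ^ κ) ^ (-α)
      ≤ c ^ (p - 1) * t ^ (-a * (p - 1)) * logFac t ^ (-α * p) +
        c ^ (p - 1) * t ^ (-a * (p - 1)) * logFac t ^ (-α * (p - 1)) *
          (K ^ α * logFac t ^ (-α)) := by gcongr
    _ = c ^ (p - 1) * (1 + K ^ α) * (t ^ (-a * (p - 1)) * logFac t ^ (-α * p)) := by
        rw [hαp]
        ring

section LogModulus

variable {Ω : Type*} [MeasurableSpace Ω] {μ : Measure Ω}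

/-- `F` has logarithmic modulus of integrability of order `α` with constant `Q`: its integral over
a set of measure at most `s` is at most `Q [log(e + 1/s)]^{-α}`. For `F = |f|^q` this says that the
`q`-th power of the weak Zygmund type norm of `f` is at most `Q`; bounding `μ E` by `s` instead of
prescribing it makes the notion stable under restricting `μ`. -/
def HasLogModulus (μ : Measure Ω) (α : ℝ) (Q : ℝ≥0∞) (F : Ω → ℝ≥0∞) : Prop :=
  ∀ ⦃E : Set Ω⦄, MeasurableSet E → ∀ ⦃s : ℝ⦄, 0 < s → μ E ≤ ENNReal.ofReal s →
    ∫⁻ x in E, F x ∂μ ≤ ENNReal.ofReal (logFac s ^ (-α)) * Q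

variable {α p : ℝ} {Q : ℝ≥0∞} {F G : Ω → ℝ≥0∞} {E : Set Ω}

theorem HasLogModulus.mono (hF : HasLogModulus μ α Q F) (hGF : ∀ x, G x ≤ F x) :
    HasLogModulus μ α Q G :=
  fun _ hE _ hs hEs => (lintegral_mono hGF).trans (hF hE hs hEs)

theorem hasLogModulus_iff_forall_measure_eq (hα : 0 ≤ α) :
    HasLogModulus μ α Q F ↔ ∀ ⦃E⦄, MeasurableSet E → ∀ ⦃s : ℝ⦄, 0 < s →
      μ E = ENNReal.ofReal s → ∫⁻ x in E, F x ∂μ ≤ ENNReal.ofReal (logFac s ^ (-α)) * Q := by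
  refine ⟨fun hF E hE s hs hEs => hF hE hs hEs.le, fun hF E hE s hs hEs => ?_⟩
  rcases eq_or_ne (μ E) 0 with hE0 | hE0
  · simp only [setLIntegral_measure_zero _ _ hE0, zero_le]
  have hEtop : μ E ≠ ⊤ := ne_top_of_le_ne_top ENNReal.ofReal_ne_top hEs
  have hEpos : 0 < (μ E).toReal := ENNReal.toReal_pos hE0 hEtop
  calc ∫⁻ x in E, F x ∂μ ≤ ENNReal.ofReal (logFac (μ E).toReal ^ (-α)) * Q :=
        hF hE hEpos (ENNReal.ofReal_toReal hEtop).symm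
    _ ≤ ENNReal.ofReal (logFac s ^ (-α)) * Q := by
        gcongr ?_ * Q
        exact ENNReal.ofReal_le_ofReal (Real.rpow_le_rpow_of_nonpos (logFac_pos hs)
          (logFac_anti hEpos (ENNReal.toReal_le_of_le_ofReal hs.le hEs)) (neg_nonpos.mpr hα))

theorem hasLogModulus_indicator_iff {B : Set Ω} (hB : MeasurableSet B) :
    HasLogModulus μ α Q (B.indicator F) ↔ HasLogModulus (μ.restrict B) α Q F := by
  have hrestrict : ∀ E, MeasurableSet E → ∫⁻ x in E, F x ∂μ.restrict B = ∫⁻ x in E ∩ B, F x ∂μ :=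
    fun E hE => by rw [Measure.restrict_restrict hE]
  constructor
  · intro hF E hE s hs hEs
    rw [Measure.restrict_apply hE] at hEs
    have hEB := hF (hE.inter hB) hs hEs
    rwa [setLIntegral_indicator hB, inter_eq_right.mpr inter_subset_right, ← hrestrict E hE] at hEB
  · intro hF E hE s hs hEs
    rw [setLIntegral_indicator hB, inter_comm, ← hrestrict E hE]
    exact hF hE hs ((Measure.restrict_apply_le B E).trans hEs)

theorem HasLogModulus.setLIntegral_le (hF : HasLogModulus μ α Q F) (hα : 0 ≤ α)
    (hE : MeasurableSet E) (hEtop : μ E ≠ ⊤) : ∫⁻ x in E, F x ∂μ ≤ Q := by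
  have hs : 0 < (μ E).toReal + 1 := by positivity
  have hEs : μ E ≤ ENNReal.ofReal ((μ E).toReal + 1) :=
    ENNReal.le_ofReal_iff_toReal_le hEtop hs.le |>.mpr (by linarith)
  refine (hF hE hs hEs).trans (mul_le_of_le_one_left' (ENNReal.ofReal_le_one.mpr ?_))
  exact Real.rpow_le_one_of_one_le_of_nonpos (one_le_logFac hs) (neg_nonpos.mpr hα)

theorem rpow_eq_rpow_sub_one_mul (hp : 1 ≤ p) (x : ℝ≥0∞) : x ^ p = x ^ (p - 1) * x := by
  have := ENNReal.rpow_add_of_nonneg (x := x) (p - 1) 1 (sub_nonneg.mpr hp) zero_le_one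
  rwa [sub_add_cancel, ENNReal.rpow_one] at this

theorem setLIntegral_rpow_le_mul {M : ℝ≥0∞} (hp : 1 ≤ p) (hF : Measurable F)
    (hE : MeasurableSet E) (hFM : ∀ x ∈ E, F x ≤ M) :
    ∫⁻ x in E, F x ^ p ∂μ ≤ M ^ (p - 1) * ∫⁻ x in E, F x ∂μ := by
  have := sub_nonneg.mpr hp
  rw [← lintegral_const_mul _ hF]
  refine setLIntegral_mono' hE fun x hx => ?_
  calc F x ^ p = F x ^ (p - 1) * F x := rpow_eq_rpow_sub_one_mul hp _
    _ ≤ M ^ (p - 1) * F x := by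
        gcongr
        exact hFM x hx

theorem ofReal_mul_rpow {A : ℝ} (hA : 0 ≤ A) (hp : 0 ≤ p) (Q : ℝ≥0∞) :
    (ENNReal.ofReal A * Q) ^ p = ENNReal.ofReal (A ^ p) * Q ^ p := by
  rw [ENNReal.mul_rpow_of_nonneg _ _ hp, ENNReal.ofReal_rpow_of_nonneg hA hp]

theorem setLIntegral_rpow_le_of_measure_le {A s : ℝ} (hA : 0 ≤ A) (hp : 0 ≤ p)
    (hFA : ∀ x, F x ≤ ENNReal.ofReal A * Q) (hEs : μ E ≤ ENNReal.ofReal s) :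
    ∫⁻ x in E, F x ^ p ∂μ ≤ ENNReal.ofReal (A ^ p * s) * Q ^ p :=
  calc ∫⁻ x in E, F x ^ p ∂μ ≤ ∫⁻ _ in E, ENNReal.ofReal (A ^ p) * Q ^ p ∂μ := by
        refine lintegral_mono fun x => ?_
        rw [← ofReal_mul_rpow hA hp]
        exact ENNReal.rpow_le_rpow (hFA x) hp
    _ = ENNReal.ofReal (A ^ p) * Q ^ p * μ E := setLIntegral_const _ _
    _ ≤ ENNReal.ofReal (A ^ p) * Q ^ p * ENNReal.ofReal s := by gcongr
    _ = ENNReal.ofReal (A ^ p * s) * Q ^ p := by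
        rw [ENNReal.ofReal_mul (by positivity)]
        ring

theorem HasLogModulus.measure_inter_lt_le (hF : HasLogModulus μ α Q F) (hα : 0 ≤ α)
    (hFm : Measurable F) (hE : MeasurableSet E) (hEtop : μ E ≠ ⊤) (hQ0 : Q ≠ 0) (hQtop : Q ≠ ⊤)
    {θ : ℝ} (hθ : 0 < θ) :
    μ (E ∩ {x | ENNReal.ofReal θ * Q < F x}) ≤ ENNReal.ofReal (1 / θ) := by
  have hθQ0 : ENNReal.ofReal θ * Q ≠ 0 := mul_ne_zero (ENNReal.ofReal_pos.mpr hθ).ne' hQ0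
  have hθQtop : ENNReal.ofReal θ * Q ≠ ⊤ := ENNReal.mul_ne_top ENNReal.ofReal_ne_top hQtop
  calc μ (E ∩ {x | ENNReal.ofReal θ * Q < F x})
      ≤ μ.restrict E {x | ENNReal.ofReal θ * Q ≤ F x} := by
        rw [Measure.restrict_apply' hE, inter_comm]
        gcongr
        exact fun hx => hx.le
    _ ≤ (∫⁻ x in E, F x ∂μ) / (ENNReal.ofReal θ * Q) :=
        meas_ge_le_lintegral_div hFm.aemeasurable hθQ0 hθQtop
    _ ≤ Q / (ENNReal.ofReal θ * Q) := by
        gcongr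
        exact hF.setLIntegral_le hα hE hEtop
    _ = ENNReal.ofReal (1 / θ) := by
        rw [ENNReal.ofReal_div_of_pos hθ, ENNReal.ofReal_one,
          ← ENNReal.mul_div_mul_right 1 _ hQ0 hQtop, one_mul]

-- On `{F ≤ θ Q}` one uses the total mass; on `{F > θ Q}`, of measure at most `1 / θ`, the modulus.
theorem HasLogModulus.setLIntegral_rpow_le (hF : HasLogModulus μ α Q F) (hα : 0 ≤ α) (hp : 1 ≤ p)
    (hFm : Measurable F) {A : ℝ} (hA : 0 ≤ A) (hFA : ∀ x, F x ≤ ENNReal.ofReal A * Q)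
    (hE : MeasurableSet E) (hEtop : μ E ≠ ⊤) {θ : ℝ} (hθ : 0 < θ) :
    ∫⁻ x in E, F x ^ p ∂μ ≤
      ENNReal.ofReal (θ ^ (p - 1) + A ^ (p - 1) * logFac (1 / θ) ^ (-α)) * Q ^ p := by
  have hp0 : 0 < p := one_pos.trans_le hp
  have hp1 : 0 ≤ p - 1 := sub_nonneg.mpr hp
  have hLθ := logFac_pos (one_div_pos.mpr hθ)
  rcases eq_or_ne Q 0 with rfl | hQ0
  · simp_all
  rcases eq_or_ne Q ⊤ with rfl | hQtop
  · rw [ENNReal.top_rpow_of_pos hp0, ENNReal.mul_top (ENNReal.ofReal_pos.mpr (by positivity)).ne']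
    exact le_top
  set S := {x | ENNReal.ofReal θ * Q < F x}
  have hS : MeasurableSet S := measurableSet_lt measurable_const hFm
  have hhigh : ∫⁻ x in E ∩ S, F x ^ p ∂μ ≤
      ENNReal.ofReal (A ^ (p - 1) * logFac (1 / θ) ^ (-α)) * Q ^ p := by
    refine (setLIntegral_rpow_le_mul hp hFm (hE.inter hS) fun x _ => hFA x).trans ?_
    rw [ofReal_mul_rpow hA hp1, rpow_eq_rpow_sub_one_mul hp Q, ENNReal.ofReal_mul (by positivity),
      mul_mul_mul_comm]
    gcongr
    exact hF (hE.inter hS) (by positivity)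
      (hF.measure_inter_lt_le hα hFm hE hEtop hQ0 hQtop hθ)
  have hlow : ∫⁻ x in E \ S, F x ^ p ∂μ ≤ ENNReal.ofReal (θ ^ (p - 1)) * Q ^ p := by
    refine (setLIntegral_rpow_le_mul hp hFm (hE.diff hS) fun x hx => not_lt.mp hx.2).trans ?_
    rw [ofReal_mul_rpow hθ.le hp1, rpow_eq_rpow_sub_one_mul hp Q, mul_assoc]
    gcongr
    exact hF.setLIntegral_le hα (hE.diff hS) (measure_ne_top_of_subset sdiff_subset hEtop)
  rw [← lintegral_inter_add_sdiff _ E hS, add_comm,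
    ENNReal.ofReal_add (by positivity) (by positivity), add_mul]
  exact add_le_add hlow hhigh

theorem HasLogModulus.exists_setLIntegral_rpow_le_of_rpow_le {a α β p c : ℝ} (ha : 0 < a)
    (hα : 0 ≤ α) (hβ : 0 ≤ β) (hp : 1 ≤ p) (hαβ : p = 1 → α ≤ β) (hc : 0 < c) :
    ∃ C > 0, ∀ t : ℝ, 0 < t → ∀ (μ : Measure Ω) (Q : ℝ≥0∞) (F : Ω → ℝ≥0∞), Measurable F →
      (∀ x, F x ≤ ENNReal.ofReal (c * t ^ (-a) * logFac t ^ (-α)) * Q) → HasLogModulus μ α Q F →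
      ∀ E, MeasurableSet E → ∀ s : ℝ, t ^ a ≤ s → μ E ≤ ENNReal.ofReal s →
        ∫⁻ x in E, F x ^ p ∂μ ≤ ENNReal.ofReal
          (C * (t ^ (-a * (p - 1)) * logFac t ^ (-α * p + β) * logFac s ^ (-β))) * Q ^ p := by
  rcases hp.eq_or_lt with rfl | hp1
  · refine ⟨(2 + a) ^ (β - α), by positivity,
      fun t ht μ Q F _ _ hmod E hE s hts hEs => ?_⟩
    have hs : 0 < s := lt_of_lt_of_le (by positivity) hts
    simp only [ENNReal.rpow_one, sub_self, mul_zero, Real.rpow_zero, one_mul, mul_one]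
    refine (hmod hE hs hEs).trans ?_
    gcongr
    exact logFac_rpow_neg_le_of_rpow_le ha.le (hαβ rfl) hs ht hts
  · obtain ⟨K, hK, hθ⟩ := exists_threshold_rpow_le ha hα hp1 hc
    refine ⟨K * (2 + a) ^ β, by positivity, fun t ht μ Q F hFm hsup hmod E hE s hts hEs => ?_⟩
    obtain ⟨θ, hθ0, hθt⟩ := hθ t ht
    have hs : 0 < s := lt_of_lt_of_le (by positivity) hts
    have hLt := logFac_pos ht
    have hEtop : μ E ≠ ⊤ := ne_top_of_le_ne_top ENNReal.ofReal_ne_top hEs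
    refine (hmod.setLIntegral_rpow_le hα hp hFm (by positivity) hsup hE hEtop hθ0).trans ?_
    gcongr
    calc _ ≤ K * (t ^ (-a * (p - 1)) * logFac t ^ (-α * p)) := hθt
      _ ≤ K * (t ^ (-a * (p - 1)) * logFac t ^ (-α * p)) *
            ((2 + a) ^ β * logFac t ^ β * logFac s ^ (-β)) :=
          le_mul_of_one_le_right (by positivity)
            (one_le_mul_logFac_rpow_mul_rpow_neg ha.le hβ hs ht hts)
      _ = K * (2 + a) ^ β *
            (t ^ (-a * (p - 1)) * logFac t ^ (-α * p + β) * logFac s ^ (-β)) := by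
          rw [Real.rpow_add hLt]
          ring

theorem HasLogModulus.exists_rpow {a α β p c : ℝ} (ha : 0 < a) (hα : 0 ≤ α) (hβ : 0 ≤ β)
    (hp : 1 ≤ p) (hαβ : p = 1 → α ≤ β) (hc : 0 < c) :
    ∃ C > 0, ∀ t : ℝ, 0 < t → ∀ (μ : Measure Ω) (Q : ℝ≥0∞) (F : Ω → ℝ≥0∞), Measurable F →
      (∀ x, F x ≤ ENNReal.ofReal (c * t ^ (-a) * logFac t ^ (-α)) * Q) → HasLogModulus μ α Q F →
      HasLogModulus μ β
        (ENNReal.ofReal (C * t ^ (-a * (p - 1)) * logFac t ^ (-α * p + β)) * Q ^ p)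
        fun x => F x ^ p := by
  obtain ⟨C, hC, hlarge⟩ :=
    exists_setLIntegral_rpow_le_of_rpow_le (Ω := Ω) ha hα hβ hp hαβ hc
  set D := c ^ p * ((1 + β) * (2 + a)) ^ β
  have hD : 0 < D := by positivity
  refine ⟨C + D, by positivity, fun t ht μ Q F hFm hsup hmod E hE s hs hEs => ?_⟩
  have hLt := logFac_pos ht
  have hLs := logFac_pos hs
  set W := t ^ (-a * (p - 1)) * logFac t ^ (-α * p + β) * logFac s ^ (-β)
  have : 0 ≤ W := by positivity
  have hgoal : ∫⁻ x in E, F x ^ p ∂μ ≤ ENNReal.ofReal ((C + D) * W) * Q ^ p := by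
    rcases le_total s (t ^ a) with hst | hts
    · refine (setLIntegral_rpow_le_of_measure_le (by positivity) (by linarith) hsup hEs).trans ?_
      refine mul_le_mul_left (ENNReal.ofReal_le_ofReal ?_) _
      calc _ ≤ D * W := rpow_mul_le_of_le_rpow ha.le hβ hc.le hs ht hst
        _ ≤ (C + D) * W := by gcongr; linarith
    · refine (hlarge t ht μ Q F hFm hsup hmod E hE s hts hEs).trans ?_
      refine mul_le_mul_left (ENNReal.ofReal_le_ofReal ?_) _
      gcongr
      linarith
  convert hgoal using 1
  rw [← mul_assoc, ← ENNReal.ofReal_mul (by positivity)]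
  congr 2
  ring

end LogModulus

section LConvolution

theorem measurable_lconvolution_of_aemeasurable {G : Type*} [AddGroup G] [MeasurableSpace G]
    [MeasurableAdd₂ G] [MeasurableNeg G] {μ : Measure G} [SFinite μ] {f g : G → ℝ≥0∞}
    (hf : AEMeasurable f μ) (hg : Measurable g) : Measurable (f ⋆ₗ[μ] g) := by
  have hmk : f ⋆ₗ[μ] g = hf.mk f ⋆ₗ[μ] g :=
    funext fun x => lintegral_congr_ae (hf.ae_eq_mk.mono fun y hy => by simp only [hy])
  rw [hmk]
  exact measurable_lconvolution μ hf.measurable_mk hg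

variable {G : Type*} [AddCommGroup G] [MeasurableSpace G] [MeasurableAdd₂ G] [MeasurableNeg G]
  {μ : Measure G} {f g k : G → ℝ≥0∞}

theorem lconvolution_indicator_neg {E : Set G} (hE : MeasurableSet E) (f : G → ℝ≥0∞) (x : G) :
    (f ⋆ₗ[μ] (-E).indicator 1) x = ∫⁻ y in (fun y => y - x) ⁻¹' E, f y ∂μ := by
  rw [← lintegral_indicator (by measurability), lconvolution_def]
  congr with y
  have hmem : -y + x ∈ -E ↔ y ∈ (fun y => y - x) ⁻¹' E := by
    rw [Set.mem_neg, neg_add_rev, neg_neg, mem_preimage, sub_eq_neg_add]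
  by_cases hy : y ∈ (fun y => y - x) ⁻¹' E
  · simp [hy, hmem.mpr hy]
  · simp [hy, mt hmem.mp hy]

variable [μ.IsAddLeftInvariant] [μ.IsNegInvariant]

theorem lintegral_comp_neg_add (g : G → ℝ≥0∞) (x : G) : ∫⁻ y, g (-y + x) ∂μ = ∫⁻ y, g y ∂μ := by
  simpa only [neg_add_eq_sub] using lintegral_sub_left_eq_self g x

theorem lconvolution_le_mul_lintegral {A : ℝ≥0∞} (hf : ∀ᵐ y ∂μ, f y ≤ A) (hg : Measurable g)
    (x : G) : (f ⋆ₗ[μ] g) x ≤ A * ∫⁻ y, g y ∂μ :=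
  calc (f ⋆ₗ[μ] g) x ≤ ∫⁻ y, A * g (-y + x) ∂μ :=
        lintegral_mono_ae (hf.mono fun y hy => mul_le_mul_left hy _)
    _ = A * ∫⁻ y, g y ∂μ := by
        rw [lintegral_const_mul _ (by fun_prop), lintegral_comp_neg_add]

theorem lconvolution_rpow_le {r : ℝ} (hr : 1 ≤ r) (hf : AEMeasurable f μ) (hk : Measurable k)
    (hk1 : ∫⁻ y, k y ∂μ = 1) (x : G) :
    (f ⋆ₗ[μ] k) x ^ r ≤ ((fun y => f y ^ r) ⋆ₗ[μ] k) x := by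
  have hr0 : 0 < r := one_pos.trans_le hr
  have hkx : AEMeasurable (fun y => k (-y + x)) μ := by fun_prop
  set ν := μ.withDensity fun y => k (-y + x)
  have : IsProbabilityMeasure ν :=
    ⟨by rw [withDensity_apply _ .univ, Measure.restrict_univ, lintegral_comp_neg_add, hk1]⟩
  have hν (g : G → ℝ≥0∞) (hg : AEMeasurable g μ) : (g ⋆ₗ[μ] k) x = ∫⁻ y, g y ∂ν := by
    rw [lintegral_withDensity_eq_lintegral_mul₀ hkx hg, lconvolution_def]
    simp only [Pi.mul_apply, mul_comm]
  have hfν : AEStronglyMeasurable f ν :=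
    (hf.mono_ac (withDensity_absolutelyContinuous _ _)).aestronglyMeasurable
  have hnorm := eLpNorm'_le_eLpNorm'_of_exponent_le one_pos hr ν hfν
  simp only [eLpNorm', enorm_eq_self, ENNReal.rpow_one, one_div, inv_one] at hnorm
  rwa [hν f hf, hν _ (hf.pow_const r), ← ENNReal.le_rpow_inv_iff hr0]

theorem setLIntegral_lconvolution_le [SFinite μ] {E : Set G} (hE : MeasurableSet E) {A : ℝ≥0∞}
    (hf : AEMeasurable f μ) (hk : Measurable k)
    (hfE : ∀ x, ∫⁻ y in (fun y => y - x) ⁻¹' E, f y ∂μ ≤ A) :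
    ∫⁻ x in E, (f ⋆ₗ[μ] k) x ∂μ ≤ A * ∫⁻ y, k y ∂μ := by
  have hEm : Measurable ((-E).indicator (1 : G → ℝ≥0∞)) := measurable_one.indicator hE.neg
  calc ∫⁻ x in E, (f ⋆ₗ[μ] k) x ∂μ = ((f ⋆ₗ[μ] k) ⋆ₗ[μ] (-E).indicator 1) 0 := by
        rw [lconvolution_indicator_neg hE]
        simp only [sub_zero, preimage_id']
    _ = ((f ⋆ₗ[μ] (-E).indicator 1) ⋆ₗ[μ] k) 0 := by
        rw [← lconvolution_assoc₀ hf hk.aemeasurable hEm.aemeasurable,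
          lconvolution_comm (f := k),
          lconvolution_assoc₀ hf hEm.aemeasurable hk.aemeasurable]
    _ ≤ A * ∫⁻ y, k y ∂μ := lconvolution_le_mul_lintegral
        (.of_forall fun x => (lconvolution_indicator_neg hE f x).trans_le (hfE x)) hk 0

theorem HasLogModulus.lconvolution [SFinite μ] {α : ℝ} {Q : ℝ≥0∞} {B : Set G}
    (hB : MeasurableSet B) (hf : AEMeasurable f μ) (hk : Measurable k) (hk1 : ∫⁻ y, k y ∂μ = 1)
    (hmod : ∀ x, HasLogModulus (μ.restrict ((fun y => y - x) ⁻¹' B)) α Q f) :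
    HasLogModulus (μ.restrict B) α Q (f ⋆ₗ[μ] k) := by
  intro E hE s hs hEs
  rw [Measure.restrict_apply hE] at hEs
  rw [Measure.restrict_restrict hE]
  refine (setLIntegral_lconvolution_le (hE.inter hB) hf hk fun x => ?_).trans_eq
    (by rw [hk1, mul_one])
  have hEx : MeasurableSet ((fun y => y - x) ⁻¹' E) := hE.preimage (measurable_sub_const x)
  have hmeas : μ.restrict ((fun y => y - x) ⁻¹' B) ((fun y => y - x) ⁻¹' E) ≤
      ENNReal.ofReal s := by
    rw [Measure.restrict_apply hEx, ← preimage_inter]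
    simpa only [sub_eq_add_neg, measure_preimage_add_right] using hEs
  simpa only [Measure.restrict_restrict hEx, ← preimage_inter] using hmod x hEx hs hmeas

end LConvolution

section HeatKernel

variable {n : ℕ} {t : ℝ}

/-- The heat kernel at time `t` as an `ℝ≥0∞`-valued density, so that it can be convolved with
nonnegative functions without integrability conditions. -/
noncomputable def heatDensity (n : ℕ) (t : ℝ) (x : EuclideanSpace ℝ (Fin n)) : ℝ≥0∞ :=
  ENNReal.ofReal (heatKernel n x t)

theorem heatKernel_nonneg (ht : 0 ≤ t) (x : EuclideanSpace ℝ (Fin n)) : 0 ≤ heatKernel n x t := by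
  unfold heatKernel
  positivity

theorem measurable_heatDensity (n : ℕ) (t : ℝ) : Measurable (heatDensity n t) := by
  unfold heatDensity heatKernel
  fun_prop

theorem integral_heatKernel (n : ℕ) (ht : 0 < t) : ∫ x, heatKernel n x t = 1 := by
  have hgauss := GaussianFourier.integral_rexp_neg_mul_sq_norm (V := EuclideanSpace ℝ (Fin n))
    (b := 1 / (4 * t)) (by positivity)
  have hexp (x : EuclideanSpace ℝ (Fin n)) : -‖x‖ ^ 2 / (4 * t) = -(1 / (4 * t)) * ‖x‖ ^ 2 := by
    ring
  simp only [heatKernel, hexp]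
  rw [integral_const_mul, hgauss, finrank_euclideanSpace_fin,
    show π / (1 / (4 * t)) = 4 * π * t by field_simp, ← Real.rpow_add (by positivity), neg_div,
    neg_add_cancel, Real.rpow_zero]

theorem lintegral_heatDensity (n : ℕ) (ht : 0 < t) : ∫⁻ x, heatDensity n t x = 1 := by
  have hrestrict : Integrable fun x => heatKernel n x t :=
    .of_integral_ne_zero (by rw [integral_heatKernel n ht]; exact one_ne_zero)
  unfold heatDensity
  rw [← ofReal_integral_eq_lintegral_ofReal hrestrict (.of_forall (heatKernel_nonneg ht.le)),
    integral_heatKernel n ht, ENNReal.ofReal_one]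

theorem heatKernel_le_mul_heatKernel_two_mul (ht : 0 < t) {y : EuclideanSpace ℝ (Fin n)}
    (hy : ‖y‖ ^ 2 ≤ t) (x : EuclideanSpace ℝ (Fin n)) :
    heatKernel n x t ≤
      2 ^ ((n : ℝ) / 2) * Real.exp (1 / 4) * heatKernel n (x - y) (2 * t) := by
  have hpow : (4 * π * t) ^ (-(n : ℝ) / 2) =
      2 ^ ((n : ℝ) / 2) * (4 * π * (2 * t)) ^ (-(n : ℝ) / 2) := by
    rw [show 4 * π * (2 * t) = 2 * (4 * π * t) by ring,
      Real.mul_rpow zero_le_two (by positivity), ← mul_assoc, ← Real.rpow_add two_pos, neg_div,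
      add_neg_cancel, Real.rpow_zero, one_mul]
  have hexp : -‖x‖ ^ 2 / (4 * t) ≤ 1 / 4 + -‖x - y‖ ^ 2 / (4 * (2 * t)) := by
    have hpar : ‖x - y‖ ^ 2 ≤ 2 * ‖x‖ ^ 2 + 2 * t := by
      linarith [parallelogram_law_with_norm ℝ x y, mul_self_nonneg ‖x + y‖, sq ‖x‖, sq ‖y‖,
        sq ‖x - y‖]
    rw [← sub_nonneg, show 1 / 4 + -‖x - y‖ ^ 2 / (4 * (2 * t)) - -‖x‖ ^ 2 / (4 * t) =
      (2 * ‖x‖ ^ 2 + 2 * t - ‖x - y‖ ^ 2) / (8 * t) by field_simp; ring]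
    exact div_nonneg (sub_nonneg.mpr hpar) (by positivity)
  calc heatKernel n x t
      ≤ (4 * π * t) ^ (-(n : ℝ) / 2) *
          Real.exp (1 / 4 + -‖x - y‖ ^ 2 / (4 * (2 * t))) := by
        unfold heatKernel
        gcongr
    _ = 2 ^ ((n : ℝ) / 2) * Real.exp (1 / 4) * heatKernel n (x - y) (2 * t) := by
        rw [hpow, Real.exp_add, heatKernel]
        ring

theorem volume_ball_mul_heatDensity_le (ht : 0 < t) (x : EuclideanSpace ℝ (Fin n)) :
    volume (Metric.ball (0 : EuclideanSpace ℝ (Fin n)) (√t)) * heatDensity n t x ≤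
      ENNReal.ofReal (2 ^ ((n : ℝ) / 2) * Real.exp (1 / 4)) *
        ((Metric.ball 0 (√t)).indicator 1 ⋆ₗ heatDensity n (2 * t)) x := by
  set c := 2 ^ ((n : ℝ) / 2) * Real.exp (1 / 4)
  have hmeas := measurable_heatDensity n (2 * t)
  calc volume (Metric.ball (0 : EuclideanSpace ℝ (Fin n)) (√t)) * heatDensity n t x
      = ∫⁻ _ in Metric.ball (0 : EuclideanSpace ℝ (Fin n)) (√t), heatDensity n t x := by
        rw [setLIntegral_const, mul_comm]
    _ ≤ ∫⁻ y in Metric.ball 0 (√t), ENNReal.ofReal c * heatDensity n (2 * t) (-y + x) := by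
        refine setLIntegral_mono' measurableSet_ball fun y hy => ?_
        rw [mem_ball_zero_iff, Real.lt_sqrt (norm_nonneg y)] at hy
        rw [heatDensity, heatDensity, ← ENNReal.ofReal_mul (by positivity), neg_add_eq_sub]
        exact ENNReal.ofReal_le_ofReal (heatKernel_le_mul_heatKernel_two_mul ht hy.le x)
    _ = ENNReal.ofReal c *
          ∫⁻ y in Metric.ball 0 (√t), heatDensity n (2 * t) (-y + x) :=
        lintegral_const_mul _ (by fun_prop)
    _ = ENNReal.ofReal c *
          ((Metric.ball 0 (√t)).indicator 1 ⋆ₗ heatDensity n (2 * t)) x := by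
        rw [lconvolution_def, ← lintegral_indicator measurableSet_ball]
        congr with y
        by_cases hy : y ∈ Metric.ball 0 (√t) <;> simp [hy]

theorem volume_ball_mul_lconvolution_heatDensity_le (ht : 0 < t)
    {f : EuclideanSpace ℝ (Fin n) → ℝ≥0∞} (hf : AEMeasurable f) {A : ℝ≥0∞}
    (hfA : ∀ z, ∫⁻ y in Metric.ball z (√t), f y ≤ A) (x : EuclideanSpace ℝ (Fin n)) :
    volume (Metric.ball (0 : EuclideanSpace ℝ (Fin n)) (√t)) * (f ⋆ₗ heatDensity n t) x ≤
      ENNReal.ofReal (2 ^ ((n : ℝ) / 2) * Real.exp (1 / 4)) * A := by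
  set c := 2 ^ ((n : ℝ) / 2) * Real.exp (1 / 4)
  set B := Metric.ball (0 : EuclideanSpace ℝ (Fin n)) (√t) with hB
  have hBtop : volume B ≠ ⊤ := measure_ball_lt_top.ne
  have hBneg : -B = B := by rw [hB, neg_ball, neg_zero]
  have hBm : Measurable (B.indicator (1 : EuclideanSpace ℝ (Fin n) → ℝ≥0∞)) :=
    measurable_one.indicator measurableSet_ball
  have hmeas := measurable_heatDensity n (2 * t)
  have haverage (z) : (f ⋆ₗ B.indicator 1) z ≤ A := by
    have hpre : (fun y => y - z) ⁻¹' B = Metric.ball z (√t) := by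
      ext y
      rw [hB, mem_preimage, mem_ball_zero_iff, mem_ball_iff_norm]
    rw [← hBneg, lconvolution_indicator_neg measurableSet_ball, hpre]
    exact hfA z
  calc volume B * (f ⋆ₗ heatDensity n t) x
      = ∫⁻ y, f y * (volume B * heatDensity n t (-y + x)) := by
        rw [lconvolution_def, ← lintegral_const_mul' _ _ hBtop]
        simp only [mul_left_comm]
    _ ≤ ∫⁻ y, f y * (ENNReal.ofReal c * (B.indicator 1 ⋆ₗ heatDensity n (2 * t)) (-y + x)) := by
        exact lintegral_mono fun y => mul_le_mul_right (volume_ball_mul_heatDensity_le ht _) _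
    _ = ENNReal.ofReal c * (f ⋆ₗ B.indicator 1 ⋆ₗ heatDensity n (2 * t)) x := by
        rw [lconvolution_def (f := f), ← lintegral_const_mul' _ _ ENNReal.ofReal_ne_top]
        simp only [mul_left_comm]
    _ ≤ ENNReal.ofReal c * (A * ∫⁻ y, heatDensity n (2 * t) y) := by
        rw [lconvolution_assoc₀ hf hBm.aemeasurable hmeas.aemeasurable]
        gcongr
        exact lconvolution_le_mul_lintegral (.of_forall haverage) hmeas x
    _ = ENNReal.ofReal c * A := by rw [lintegral_heatDensity n (by positivity), mul_one]

theorem exists_lconvolution_heatDensity_le {α : ℝ} (hn : 0 < n) (hα : 0 ≤ α) :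
    ∃ C > 0, ∀ t : ℝ, 0 < t → ∀ ρ, √t ≤ ρ → ∀ (Q : ℝ≥0∞) (f : EuclideanSpace ℝ (Fin n) → ℝ≥0∞),
      AEMeasurable f → (∀ z, HasLogModulus (volume.restrict (Metric.ball z ρ)) α Q f) →
      ∀ x, (f ⋆ₗ heatDensity n t) x ≤
        ENNReal.ofReal (C * t ^ (-((n : ℝ) / 2)) * logFac t ^ (-α)) * Q := by
  set v := (volume (Metric.ball (0 : EuclideanSpace ℝ (Fin n)) 1)).toReal
  have hv : 0 < v :=
    ENNReal.toReal_pos (Metric.measure_ball_pos _ _ one_pos).ne' measure_ball_lt_top.ne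
  obtain ⟨K, hK, hlog⟩ := exists_logFac_le_mul_logFac_mul_rpow (p := (n : ℝ) / 2) (by positivity) hv
  set c := 2 ^ ((n : ℝ) / 2) * Real.exp (1 / 4)
  refine ⟨c * K ^ α / v, by positivity, fun t ht ρ htρ Q f hf hmod x => ?_⟩
  have hL := logFac_pos ht
  set w := v * t ^ ((n : ℝ) / 2)
  have hw : 0 < w := by positivity
  have hvol (z : EuclideanSpace ℝ (Fin n)) :
      volume (Metric.ball z (√t)) = ENNReal.ofReal w := by
    rw [Measure.addHaar_ball_of_pos _ _ (Real.sqrt_pos.mpr ht), finrank_euclideanSpace_fin,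
      ← ENNReal.ofReal_toReal measure_ball_lt_top.ne, ← ENNReal.ofReal_mul (by positivity),
      mul_comm, Real.sqrt_eq_rpow, ← Real.rpow_mul_natCast ht.le, one_div_mul_eq_div]
  have hfA (z) : ∫⁻ y in Metric.ball z (√t), f y ≤
      ENNReal.ofReal (K ^ α * logFac t ^ (-α)) * Q := by
    have hball := hmod z measurableSet_ball hw ((Measure.restrict_apply_le _ _).trans (hvol z).le)
    rw [Measure.restrict_restrict_of_subset (Metric.ball_subset_ball htρ)] at hball
    refine hball.trans ?_
    gcongr
    exact rpow_neg_le_mul_rpow_neg hα hK hL (hlog t ht)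
  have hsup : _ ≤ ENNReal.ofReal c * _ := volume_ball_mul_lconvolution_heatDensity_le ht hf hfA x
  rw [hvol, mul_comm, ← ENNReal.le_div_iff_mul_le (.inl (ENNReal.ofReal_pos.mpr hw).ne')
    (.inl ENNReal.ofReal_ne_top)] at hsup
  refine hsup.trans_eq ?_
  rw [← mul_assoc, ← ENNReal.ofReal_mul (by positivity), mul_comm, mul_div_assoc,
    ← ENNReal.ofReal_div_of_pos hw, mul_comm]
  congr 2
  rw [Real.rpow_neg ht.le, show w = v * t ^ ((n : ℝ) / 2) from rfl]
  field_simp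

theorem enorm_heatSg_le (ht : 0 ≤ t) (φ : EuclideanSpace ℝ (Fin n) → ℝ)
    (x : EuclideanSpace ℝ (Fin n)) :
    ‖heatSg n t φ x‖ₑ ≤ ((fun y => ‖φ y‖ₑ) ⋆ₗ heatDensity n t) x := by
  refine (enorm_integral_le_lintegral_enorm _).trans_eq (lintegral_congr fun y => ?_)
  rw [enorm_mul, Real.enorm_of_nonneg (heatKernel_nonneg ht _), mul_comm, neg_add_eq_sub,
    heatDensity]

theorem enorm_heatSg_rpow_le (ht : 0 < t) {r : ℝ} (hr : 1 ≤ r)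
    {φ : EuclideanSpace ℝ (Fin n) → ℝ} (hφ : AEStronglyMeasurable φ)
    (x : EuclideanSpace ℝ (Fin n)) :
    ‖heatSg n t φ x‖ₑ ^ r ≤ ((fun y => ‖φ y‖ₑ ^ r) ⋆ₗ heatDensity n t) x :=
  (ENNReal.rpow_le_rpow (enorm_heatSg_le ht.le φ x) (by positivity)).trans
    (lconvolution_rpow_le hr hφ.enorm (measurable_heatDensity n t) (lintegral_heatDensity n ht) x)

end HeatKernel

section ZygmundNorm

variable {n : ℕ} {α ρ : ℝ} {q N : ℝ≥0∞} {f : EuclideanSpace ℝ (Fin n) → ℝ}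

theorem ofReal_rpow_mul_rpow_inv_le_iff {L p : ℝ} (hL : 0 < L) (hp : 0 < p) {I : ℝ≥0∞} :
    (ENNReal.ofReal L ^ α * I) ^ (1 / p) ≤ N ↔ I ≤ ENNReal.ofReal (L ^ (-α)) * N ^ p := by
  have hLα : 0 < L ^ α := Real.rpow_pos_of_pos hL α
  rw [one_div, ENNReal.rpow_inv_le_iff hp, ENNReal.ofReal_rpow_of_pos hL, Real.rpow_neg hL.le,
    ENNReal.ofReal_inv_of_pos hLα, mul_comm, ← ENNReal.le_div_iff_mul_le
      (.inl (ENNReal.ofReal_pos.mpr hLα).ne') (.inl ENNReal.ofReal_ne_top), ENNReal.div_eq_inv_mul]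

theorem zygNormE_le_iff_hasLogModulus (hq : 1 ≤ q) (hq' : q ≠ ⊤) (hα : 0 ≤ α) :
    zygNormE n q α f ≤ N ↔
      HasLogModulus volume α (N ^ q.toReal) fun x => ‖f x‖ₑ ^ q.toReal := by
  have hq0 : 0 < q.toReal := ENNReal.toReal_pos (zero_lt_one.trans_le hq).ne' hq'
  simp only [zygNormE, if_neg hq', iSup_le_iff, Subtype.forall, mem_Ioi,
    hasLogModulus_iff_forall_measure_eq hα, Real.enorm_eq_ofReal_abs,
    ENNReal.ofReal_rpow_of_nonneg (abs_nonneg _) hq0.le]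
  constructor
  · intro h E hE s hs hEs
    have := (ofReal_rpow_mul_rpow_inv_le_iff (logFac_pos hs) hq0).mp (h s hs)
    simp only [iSup_le_iff, Subtype.forall] at this
    exact this E ⟨hE, hEs⟩
  · intro h s hs
    rw [ofReal_rpow_mul_rpow_inv_le_iff (logFac_pos hs) hq0]
    simp only [iSup_le_iff, Subtype.forall]
    exact fun E hE => h hE.1 hs hE.2

theorem zygNormULE_le_iff_hasLogModulus (hq : 1 ≤ q) (hq' : q ≠ ⊤) (hα : 0 ≤ α) :
    zygNormULE n q α ρ f ≤ N ↔
      ∀ z, HasLogModulus (volume.restrict (Metric.ball z ρ)) α (N ^ q.toReal)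
        fun x => ‖f x‖ₑ ^ q.toReal := by
  have hq0 : 0 < q.toReal := ENNReal.toReal_pos (zero_lt_one.trans_le hq).ne' hq'
  have hind : ∀ z, (fun x => ‖(Metric.ball z ρ).indicator f x‖ₑ ^ q.toReal) =
      (Metric.ball z ρ).indicator fun x => ‖f x‖ₑ ^ q.toReal := fun z => by
    simp only [enorm_indicator_eq_indicator_enorm]
    exact (indicator_comp_of_zero (g := (· ^ q.toReal)) (ENNReal.zero_rpow_of_pos hq0)).symm
  simp only [zygNormULE, iSup_le_iff, zygNormE_le_iff_hasLogModulus hq hq' hα, hind,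
    hasLogModulus_indicator_iff Metric.isOpen_ball.measurableSet]

theorem zygNormULE_top_le_of_forall_enorm_le (hf : ∀ x, ‖f x‖ₑ ≤ N) :
    zygNormULE n ⊤ α ρ f ≤ N := by
  simp only [zygNormULE, zygNormE, if_true, iSup_le_iff, eLpNorm_exponent_top]
  exact fun z => eLpNormEssSup_le_of_ae_enorm_bound
    (ae_of_all _ fun x => (enorm_indicator_le_enorm_self _ _).trans (hf x))

theorem ae_enorm_le_zygNormULE_top (α : ℝ) (hρ : 0 < ρ) (f : EuclideanSpace ℝ (Fin n) → ℝ) :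
    ∀ᵐ y, ‖f y‖ₑ ≤ zygNormULE n ⊤ α ρ f := by
  have hball : ∀ z, ∀ᵐ y, y ∈ Metric.ball z ρ → ‖f y‖ₑ ≤ zygNormULE n ⊤ α ρ f := by
    intro z
    have hz : eLpNormEssSup ((Metric.ball z ρ).indicator f) volume ≤ zygNormULE n ⊤ α ρ f := by
      rw [← eLpNorm_exponent_top]
      exact le_iSup (fun z => zygNormE n ⊤ α ((Metric.ball z ρ).indicator f)) z
    filter_upwards [ae_le_eLpNormEssSup (f := (Metric.ball z ρ).indicator f) (μ := volume)]
      with y hy hyz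
    rw [indicator_of_mem hyz] at hy
    exact hy.trans hz
  obtain ⟨D, hDcount, hDdense⟩ :=
    TopologicalSpace.exists_countable_dense (EuclideanSpace ℝ (Fin n))
  filter_upwards [(ae_ball_iff hDcount).mpr fun z _ => hball z] with y hy
  obtain ⟨z, hz, hyz⟩ := hDdense.exists_dist_lt y hρ
  exact hy z hz hyz

end ZygmundNorm

section Smoothing

variable {n : ℕ} {t α β ρ : ℝ} {r q : ℝ≥0∞} {φ : EuclideanSpace ℝ (Fin n) → ℝ}

theorem HasLogModulus.lconvolution_heatDensity (ht : 0 < t) {Q : ℝ≥0∞}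
    {f : EuclideanSpace ℝ (Fin n) → ℝ≥0∞} (hf : AEMeasurable f)
    (hmod : ∀ z, HasLogModulus (volume.restrict (Metric.ball z ρ)) α Q f)
    (z : EuclideanSpace ℝ (Fin n)) :
    HasLogModulus (volume.restrict (Metric.ball z ρ)) α Q (f ⋆ₗ heatDensity n t) := by
  refine HasLogModulus.lconvolution measurableSet_ball hf (measurable_heatDensity n t)
    (lintegral_heatDensity n ht) fun x => ?_
  have hball : (fun y => y - x) ⁻¹' Metric.ball z ρ = Metric.ball (z + x) ρ := by
    ext y
    simp only [mem_preimage, Metric.mem_ball, dist_eq_norm, sub_sub, add_comm x z]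
  exact hball ▸ hmod (z + x)

theorem zygNormULE_top_heatSg_le (ht : 0 < t) (hρ : 0 < ρ) (α β : ℝ)
    (φ : EuclideanSpace ℝ (Fin n) → ℝ) :
    zygNormULE n ⊤ β ρ (heatSg n t φ) ≤ zygNormULE n ⊤ α ρ φ := by
  refine zygNormULE_top_le_of_forall_enorm_le fun x => (enorm_heatSg_le ht.le φ x).trans ?_
  refine (lconvolution_le_mul_lintegral (ae_enorm_le_zygNormULE_top α hρ φ)
    (measurable_heatDensity n t) x).trans_eq ?_
  rw [lintegral_heatDensity n ht, mul_one]

theorem exists_zygNormULE_top_heatSg_le (hn : 0 < n) (hr : 1 ≤ r) (hr' : r ≠ ⊤) (hα : 0 ≤ α) :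
    ∃ C > 0, ∀ t : ℝ, 0 < t → ∀ ρ, √t ≤ ρ → ∀ φ : EuclideanSpace ℝ (Fin n) → ℝ,
      AEStronglyMeasurable φ → ∀ β, zygNormULE n ⊤ β ρ (heatSg n t φ) ≤
        ENNReal.ofReal (C * t ^ (-((n : ℝ) / 2) * r.toReal⁻¹) * logFac t ^ (-α * r.toReal⁻¹)) *
          zygNormULE n r α ρ φ := by
  have hr1 : 1 ≤ r.toReal := ENNReal.toReal_mono hr' hr
  have hr0 : 0 < r.toReal := by positivity
  obtain ⟨C, hC, hsup⟩ := exists_lconvolution_heatDensity_le hn hα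
  refine ⟨C ^ r.toReal⁻¹, by positivity, fun t ht ρ hρ φ hφ β => ?_⟩
  refine zygNormULE_top_le_of_forall_enorm_le fun x => ?_
  have hL := logFac_pos ht
  rw [← ENNReal.rpow_le_rpow_iff hr0, ofReal_mul_rpow (by positivity) hr0.le,
    mul_rpow_mul_rpow_rpow (by positivity) ht.le hL.le, Real.rpow_inv_rpow hC.le hr0.ne',
    inv_mul_cancel_right₀ hr0.ne', inv_mul_cancel_right₀ hr0.ne']
  exact (enorm_heatSg_rpow_le ht hr1 hφ x).trans (hsup t ht ρ hρ _ _ (hφ.enorm.pow_const _)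
    ((zygNormULE_le_iff_hasLogModulus hr hr' hα).mp le_rfl) x)

theorem exists_zygNormULE_heatSg_le (hn : 0 < n) (hr : 1 ≤ r) (hrq : r ≤ q) (hq' : q ≠ ⊤)
    (hα : 0 ≤ α) (hβ : 0 ≤ β) (hcrit : r = q → α ≤ β) :
    ∃ C > 0, ∀ t : ℝ, 0 < t → ∀ ρ, √t ≤ ρ → ∀ φ : EuclideanSpace ℝ (Fin n) → ℝ,
      AEStronglyMeasurable φ → zygNormULE n q β ρ (heatSg n t φ) ≤
        ENNReal.ofReal (C * t ^ (-((n : ℝ) / 2) * (r.toReal⁻¹ - q.toReal⁻¹)) *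
          logFac t ^ (-α * r.toReal⁻¹ + β * q.toReal⁻¹)) * zygNormULE n r α ρ φ := by
  have hr' : r ≠ ⊤ := ne_top_of_le_ne_top hq' hrq
  have hr1 : 1 ≤ r.toReal := ENNReal.toReal_mono hr' hr
  have hr0 : 0 < r.toReal := by positivity
  have hq0 : 0 < q.toReal := hr0.trans_le (ENNReal.toReal_mono hq' hrq)
  set p := q.toReal / r.toReal
  have hrp : r.toReal * p = q.toReal := mul_div_cancel₀ _ hr0.ne'
  have hp1 : 1 ≤ p := (one_le_div hr0).mpr (ENNReal.toReal_mono hq' hrq)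
  have hαβ (hp1 : p = 1) : α ≤ β :=
    hcrit ((ENNReal.toReal_eq_toReal_iff' hr' hq').mp (by rw [← hrp, hp1, mul_one]))
  obtain ⟨c, hc, hsup⟩ := exists_lconvolution_heatDensity_le hn hα
  obtain ⟨C, hC, hpow⟩ := HasLogModulus.exists_rpow (Ω := EuclideanSpace ℝ (Fin n))
    (show 0 < (n : ℝ) / 2 by positivity) hα hβ hp1 hαβ hc
  refine ⟨C ^ q.toReal⁻¹, by positivity, fun t ht ρ hρ φ hφ => ?_⟩
  have hL := logFac_pos ht
  have hφr : AEMeasurable (fun y => ‖φ y‖ₑ ^ r.toReal) := hφ.enorm.pow_const _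
  have hmod := (zygNormULE_le_iff_hasLogModulus (f := φ) (ρ := ρ) hr hr' hα).mp le_rfl
  have hconst : (ENNReal.ofReal (C ^ q.toReal⁻¹ * t ^ (-((n : ℝ) / 2) * (r.toReal⁻¹ - q.toReal⁻¹)) *
      logFac t ^ (-α * r.toReal⁻¹ + β * q.toReal⁻¹)) * zygNormULE n r α ρ φ) ^ q.toReal =
      ENNReal.ofReal (C * t ^ (-((n : ℝ) / 2) * (p - 1)) * logFac t ^ (-α * p + β)) *
        (zygNormULE n r α ρ φ ^ r.toReal) ^ p := by
    rw [ofReal_mul_rpow (by positivity) hq0.le, mul_rpow_mul_rpow_rpow (by positivity) ht.le hL.le,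
      Real.rpow_inv_rpow hC.le hq0.ne', ← ENNReal.rpow_mul, hrp, mul_assoc (-_) _ q.toReal,
      sub_mul, add_mul, mul_assoc (-α), inv_mul_cancel₀ hq0.ne', inv_mul_cancel_right₀ hq0.ne',
      inv_mul_eq_div]
  rw [zygNormULE_le_iff_hasLogModulus (hr.trans hrq) hq' hβ, hconst]
  intro z
  refine (hpow t ht _ _ _ (measurable_lconvolution_of_aemeasurable hφr
    (measurable_heatDensity n t)) (hsup t ht ρ hρ _ _ hφr hmod)
    (HasLogModulus.lconvolution_heatDensity ht hφr hmod z)).mono fun x => ?_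
  rw [← hrp, ENNReal.rpow_mul]
  gcongr
  exact enorm_heatSg_rpow_le ht hr1 hφ x

end Smoothing

theorem stmt4 (n : ℕ) (hn : 1 ≤ n) (r q : ℝ≥0∞) (α β : ℝ)
    (hr : 1 ≤ r) (hrq : r ≤ q) (hα : 0 ≤ α) (hβ : 0 ≤ β) (hcrit : r = q → α ≤ β) :
    ∃ C > (0 : ℝ), ∀ T : ℝ, 0 < T →
      ∀ φ : EuclideanSpace ℝ (Fin n) → ℝ, LocallyIntegrable φ volume →
        zygNormULE n r α (T ^ ((1 : ℝ) / 2)) φ < ⊤ →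
        ∀ t : ℝ, 0 < t → t ≤ T →
          zygNormULE n q β (T ^ ((1 : ℝ) / 2)) (heatSg n t φ) ≤
            ENNReal.ofReal (C * t ^ (-((n : ℝ) / 2) * (r⁻¹.toReal - q⁻¹.toReal)) *
                logFac t ^ (-α * r⁻¹.toReal + β * q⁻¹.toReal)) *
              zygNormULE n r α (T ^ ((1 : ℝ) / 2)) φ := by
  have hsqrt {T t : ℝ} (htT : t ≤ T) : √t ≤ T ^ ((1 : ℝ) / 2) :=
    (Real.sqrt_le_sqrt htT).trans_eq (Real.sqrt_eq_rpow T)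
  rcases eq_or_ne q ⊤ with rfl | hq
  · rcases eq_or_ne r ⊤ with rfl | hr'
    · refine ⟨1, one_pos, fun T hT φ _ _ t ht _ => ?_⟩
      simpa only [sub_self, mul_zero, ENNReal.inv_top, ENNReal.toReal_zero, add_zero,
        Real.rpow_zero, mul_one, ENNReal.ofReal_one, one_mul]
        using zygNormULE_top_heatSg_le ht (by positivity) α β φ
    · obtain ⟨C, hC, hS⟩ := exists_zygNormULE_top_heatSg_le hn hr hr' hα
      refine ⟨C, hC, fun T _ φ hφ _ t ht htT => ?_⟩
      simpa only [ENNReal.toReal_inv, ENNReal.inv_top, ENNReal.toReal_zero, sub_zero, mul_zero,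
        add_zero]
        using hS t ht _ (hsqrt htT) φ hφ.aestronglyMeasurable β
  · obtain ⟨C, hC, hS⟩ := exists_zygNormULE_heatSg_le hn hr hrq hq hα hβ hcrit
    refine ⟨C, hC, fun T _ φ hφ _ t ht htT => ?_⟩
    simpa only [ENNReal.toReal_inv] using hS t ht _ (hsqrt htT) φ hφ.aestronglyMeasurable
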